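/- Let k be a field with char(k) ≠ 2 and char(k) ≠ 3, let L and L' be finite-dimensional 5-graded Lie algebras over k, and let f : L → L' be a homomorphism of Lie algebras such that f(L_i) ⊆ L'_i for all i ∈ ℤ and the restriction f|_{L_i} : L_i → L'_i is bijective for every i ∈ {1,−1,2,−2}. If L is algebraic, then L' is algebraic. -/

import Mathlib

/-- The exponential-type endomorphism `e(v) := Σ_{i=0}^{4} (1/i!)·(ad v)^i` of a Lie
algebra over a commutative ring in which `2` and `3` are invertible. -/
noncomputable def eMap (R : Type*) {L : Type*} [CommRing R] [LieRing L] [LieAlgebra R L]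
    [Invertible (2 : R)] [Invertible (3 : R)] (v : L) : Module.End R L :=
  1 + (LieAlgebra.ad R L v) + ⅟(2:R) • (LieAlgebra.ad R L v) ^ 2
    + (⅟(2:R) * ⅟(3:R)) • (LieAlgebra.ad R L v) ^ 3
    + (⅟(2:R) * ⅟(2:R) * ⅟(2:R) * ⅟(3:R)) • (LieAlgebra.ad R L v) ^ 4

section Helpers

variable {k L L' : Type*} [Field k] [Invertible (2 : k)] [Invertible (3 : k)]
    [LieRing L] [LieAlgebra k L] [LieRing L'] [LieAlgebra k L']

theorem eMap_apply' (v a : L) : eMap k v a = a + ⁅v, a⁆ + ⅟(2:k) • ⁅v, ⁅v, a⁆⁆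
    + (⅟(2:k) * ⅟(3:k)) • ⁅v, ⁅v, ⁅v, a⁆⁆⁆
    + (⅟(2:k) * ⅟(2:k) * ⅟(2:k) * ⅟(3:k)) • ⁅v, ⁅v, ⁅v, ⁅v, a⁆⁆⁆⁆ := by
  simp [eMap, pow_succ]

theorem eMap_map (f : L →ₗ⁅k⁆ L') (v a : L) : f (eMap k v a) = eMap k (f v) (f a) := by
  simp only [eMap_apply', map_add, map_smul, LieHom.map_lie]

/-- Part of weighted degree at least `m`. -/
def filt (g : ℤ → Submodule k L) (σ m : ℤ) : Submodule k L :=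
  ⨆ i : {i : ℤ // m ≤ σ * i}, g i

theorem mem_filt (g : ℤ → Submodule k L) (σ m i : ℤ) (h : m ≤ σ * i) {x : L} (hx : x ∈ g i) :
    x ∈ filt g σ m :=
  (le_iSup (fun i : {i : ℤ // m ≤ σ * i} => g i) ⟨i, h⟩) hx

theorem lie_filt (g : ℤ → Submodule k L)
    (hb : ∀ i j : ℤ, ∀ x ∈ g i, ∀ y ∈ g j, ⁅x, y⁆ ∈ g (i + j)) (σ m n r : ℤ) (hr : m + n = r)
    {x y : L} (hx : x ∈ filt g σ m) (hy : y ∈ filt g σ n) : ⁅x, y⁆ ∈ filt g σ r := by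
  unfold filt at hx
  induction hx using Submodule.iSup_induction' with
  | mem i x hx =>
    unfold filt at hy
    induction hy using Submodule.iSup_induction' with
    | mem j y hy =>
      refine mem_filt g σ r (i + j) ?_ (hb _ _ x hx y hy)
      have := i.2
      have := j.2
      rw [mul_add]
      omega
    | zero => simp
    | add y z _ _ h1 h2 => rw [lie_add]; exact add_mem h1 h2
  | zero => simp
  | add y z _ _ h1 h2 => rw [add_lie]; exact add_mem h1 h2

theorem filt_zero (g : ℤ → Submodule k L) (hbound : ∀ i : ℤ, 2 < |i| → g i = ⊥)
    (σ m : ℤ) (hσ : σ = 1 ∨ σ = -1) (hm : 3 ≤ m) {x : L} (hx : x ∈ filt g σ m) : x = 0 := by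
  have : filt g σ m = ⊥ := by
    refine iSup_eq_bot.2 fun i => hbound _ ?_
    have := i.2
    rw [lt_abs]
    rcases hσ with rfl | rfl <;> omega
  simpa [this] using hx

theorem eMap_lie_aux (v a b : L)
    (d : ℕ → L) (e : ℕ → L) (hd0 : d 0 = a) (he0 : e 0 = b)
    (hd : ∀ i, ⁅v, d i⁆ = d (i + 1)) (he : ∀ i, ⁅v, e i⁆ = e (i + 1))
    (h0 : ∀ i j, 5 ≤ i + j → ⁅d i, e j⁆ = 0) :
    eMap k v ⁅a, b⁆ = ⁅eMap k v a, eMap k v b⁆ := by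
  subst hd0 he0
  have h2 : (2 : k) ≠ 0 := Invertible.ne_zero 2
  have h3 : (3 : k) ≠ 0 := Invertible.ne_zero 3
  have key : ∀ i j, ⁅v, ⁅d i, e j⁆⁆ = ⁅d (i + 1), e j⁆ + ⁅d i, e (j + 1)⁆ := by
    intro i j
    rw [leibniz_lie, hd, he]
  simp only [eMap_apply', key, hd, he, lie_add, add_lie, smul_lie, lie_smul, Nat.reduceAdd,
    zero_add]
  rw [h0 1 4 (by norm_num), h0 2 3 (by norm_num), h0 2 4 (by norm_num), h0 3 2 (by norm_num),
    h0 3 3 (by norm_num), h0 3 4 (by norm_num), h0 4 1 (by norm_num), h0 4 2 (by norm_num),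
    h0 4 3 (by norm_num), h0 4 4 (by norm_num)]
  simp only [invOf_eq_inv]
  match_scalars <;> field_simp <;> norm_num

theorem eMap_bij (v : L) (h : ∀ a : L, ⁅v, ⁅v, ⁅v, ⁅v, ⁅v, a⁆⁆⁆⁆⁆ = 0) :
    Function.Bijective (eMap k v) := by
  rw [← Module.End.isUnit_iff]
  set D := LieAlgebra.ad k L v with hD
  have hn : IsNilpotent D := ⟨5, by
    ext a
    simp [pow_succ, hD, h]⟩
  set P : Module.End k L := 1 + ⅟(2:k) • D + (⅟(2:k) * ⅟(3:k)) • D ^ 2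
    + (⅟(2:k) * ⅟(2:k) * ⅟(2:k) * ⅟(3:k)) • D ^ 3 with hP
  have hc : Commute D P := by
    rw [hP]
    refine (((Commute.one_right D).add_right ?_).add_right ?_).add_right ?_
    · exact (Commute.refl D).smul_right _
    · exact ((Commute.refl D).pow_right _).smul_right _
    · exact ((Commute.refl D).pow_right _).smul_right _
  have he : eMap k v = 1 + D * P := by
    rw [eMap, hP]
    simp only [mul_add, mul_smul_comm, ← hD, mul_one, ← pow_succ', ← pow_two]
    abel
  rw [he]
  exact (hc.isNilpotent_mul_right hn).isUnit_one_add

end Helpers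



/-- Let `k` be a field with `char k ≠ 2, 3`, let `L`, `L'` be
finite-dimensional 5-graded Lie algebras over `k`, and let `f : L → L'` be a Lie algebra
homomorphism with `f(L_i) ⊆ L'_i` for all `i`, whose restriction `L_i → L'_i` is
bijective for every `i ∈ {1,-1,2,-2}`.  If `L` is algebraic then `L'` is algebraic. -/
theorem stmt4 {k L L' : Type*} [Field k] [Invertible (2 : k)] [Invertible (3 : k)]
    [LieRing L] [LieAlgebra k L] [FiniteDimensional k L]
    [LieRing L'] [LieAlgebra k L'] [FiniteDimensional k L']
    (g : ℤ → Submodule k L) (g' : ℤ → Submodule k L')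
    (hinternal : DirectSum.IsInternal g) (hinternal' : DirectSum.IsInternal g')
    (hbracket : ∀ i j : ℤ, ∀ x ∈ g i, ∀ y ∈ g j, ⁅x, y⁆ ∈ g (i + j))
    (hbracket' : ∀ i j : ℤ, ∀ x ∈ g' i, ∀ y ∈ g' j, ⁅x, y⁆ ∈ g' (i + j))
    (hbound : ∀ i : ℤ, 2 < |i| → g i = ⊥)
    (hbound' : ∀ i : ℤ, 2 < |i| → g' i = ⊥)
    (f : L →ₗ⁅k⁆ L')
    (hfgrade : ∀ i : ℤ, ∀ v ∈ g i, f v ∈ g' i)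
    (hfbij : ∀ i : ℤ, i = 1 ∨ i = -1 ∨ i = 2 ∨ i = -2 →
      Set.BijOn f (g i : Set L) (g' i : Set L'))
    (halg : ∀ σ : ℤ, σ = 1 ∨ σ = -1 → ∀ x ∈ g σ, ∀ s ∈ g (2 * σ),
      Function.Bijective (eMap k (x + s)) ∧
      ∀ a b : L, eMap k (x + s) ⁅a, b⁆ = ⁅eMap k (x + s) a, eMap k (x + s) b⁆) :
    ∀ σ : ℤ, σ = 1 ∨ σ = -1 → ∀ x ∈ g' σ, ∀ s ∈ g' (2 * σ),
      Function.Bijective (eMap k (x + s)) ∧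
      ∀ a b : L', eMap k (x + s) ⁅a, b⁆ = ⁅eMap k (x + s) a, eMap k (x + s) b⁆ := by
  intro σ hσ x hx s hs
  have hσσ : σ * σ = 1 := by rcases hσ with rfl | rfl <;> norm_num
  set v := x + s with hv
  have hvF : v ∈ filt g' σ 1 :=
    add_mem (mem_filt g' σ 1 σ (by omega) hx)
      (mem_filt g' σ 1 (2 * σ) (by nlinarith) hs)
  have hstep : ∀ (m : ℤ) (a : L'), a ∈ filt g' σ m → ⁅v, a⁆ ∈ filt g' σ (m + 1) :=
    fun m a ha => lie_filt g' hbracket' σ 1 m _ (by ring) hvF ha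
  have htop : ∀ a : L', a ∈ ⨆ i, g' i := by
    intro a
    rw [hinternal'.submodule_iSup_eq_top]
    trivial
  have hsmall : ∀ (i : ℤ) (a : L'), a ∈ g' i → a = 0 ∨ (-2 ≤ σ * i ∧ σ * i ≤ 2) := by
    intro i a ha
    by_cases h : 2 < |i|
    · left
      simpa [hbound' i h] using ha
    · right
      rw [not_lt, abs_le] at h
      rcases hσ with rfl | rfl <;> omega
  have hF2 : ∀ a : L', a ∈ filt g' σ (-2) := by
    intro a
    induction htop a using Submodule.iSup_induction' with
    | mem i a ha =>
      rcases hsmall i a ha with rfl | h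
      · exact zero_mem _
      · exact mem_filt g' σ _ i h.1 ha
    | zero => exact zero_mem _
    | add a b _ _ h1 h2 => exact add_mem h1 h2
  refine ⟨eMap_bij v fun a => ?_, fun a b => ?_⟩
  · exact filt_zero g' hbound' σ _ hσ (by norm_num)
      (hstep _ _ (hstep _ _ (hstep _ _ (hstep _ _ (hstep _ _ (hF2 a))))))
  induction htop a using Submodule.iSup_induction' with
  | zero => simp
  | add a a' _ _ h1 h2 => rw [add_lie, map_add, map_add, add_lie, h1, h2]
  | mem p a ha =>
  induction htop b using Submodule.iSup_induction' with
  | zero => simp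
  | add a a' _ _ h1 h2 => rw [lie_add, map_add, map_add, lie_add, h1, h2]
  | mem q b hb =>
  rcases hsmall p a ha with rfl | hp
  · simp
  rcases hsmall q b hb with rfl | hq
  · simp
  by_cases hpq : -2 ≤ σ * p + σ * q
  · have hit : ∀ (m : ℤ) (c : L'), c ∈ filt g' σ m → ∀ n : ℕ,
        (fun y => ⁅v, y⁆)^[n] c ∈ filt g' σ (m + n) := by
      intro m c hc n
      induction n with
      | zero => simpa using hc
      | succ n ih =>
        rw [Function.iterate_succ_apply']
        have := hstep _ _ ih
        rw [add_assoc] at this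
        exact_mod_cast this
    refine eMap_lie_aux v a b (fun n => (fun y => ⁅v, y⁆)^[n] a)
      (fun n => (fun y => ⁅v, y⁆)^[n] b) rfl rfl
      (fun i => (Function.iterate_succ_apply' _ _ _).symm)
      (fun i => (Function.iterate_succ_apply' _ _ _).symm) ?_
    intro i j hij
    refine filt_zero g' hbound' σ _ hσ ?_ (lie_filt g' hbracket' σ _ _ _ rfl
      (hit _ a (mem_filt g' σ _ p le_rfl ha) i) (hit _ b (mem_filt g' σ _ q le_rfl hb) j))
    omega
  · have hlift : ∀ (i : ℤ), (i = 1 ∨ i = -1 ∨ i = 2 ∨ i = -2) → ∀ y ∈ g' i,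
        ∃ z ∈ g i, f z = y := fun i hi y hy => (hfbij i hi).surjOn hy
    obtain ⟨a, -, rfl⟩ := hlift p (by rcases hσ with rfl | rfl <;> omega) a ha
    obtain ⟨b, -, rfl⟩ := hlift q (by rcases hσ with rfl | rfl <;> omega) b hb
    obtain ⟨x, hx0, rfl⟩ := hlift σ (by rcases hσ with rfl | rfl <;> omega) x hx
    obtain ⟨s, hs0, rfl⟩ := hlift (2 * σ) (by rcases hσ with rfl | rfl <;> omega) s hs
    rw [hv, ← map_add, ← LieHom.map_lie, ← eMap_map, ← eMap_map, ← eMap_map,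
      (halg σ hσ x hx0 s hs0).2 a b, LieHom.map_lie]
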